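/- (Inductive step in the proof of Lemma 11.4 of the paper.) Assume a ∈ ℕ, a ≥ 1, and a + D·(d₁ + … + d_l) < d. Let E′₀ be a complex subspace of E with dim_ℂ E′₀ = a − 1 such that E′₀ ∩ F(v) = {0} for every v ∈ V. Then the set of vectors e ∈ E such that e ∉ E′₀ and (E′₀ + ℂ·e) ∩ F(v) = {0} for every v ∈ V is dense in E. -/

import Mathlib

open scoped Manifold
open Bundle TopologicalSpace Module

theorem aux_local {D n : ℕ} {E : Type} [NormedAddCommGroup E] [NormedSpace ℂ E]
    {B : Type} [TopologicalSpace B] [ChartedSpace (EuclideanSpace ℝ (Fin D)) B]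
    (Efam : B → Type)
    [∀ x, AddCommGroup (Efam x)] [∀ x, Module ℂ (Efam x)]
    [∀ x, TopologicalSpace (Efam x)]
    [TopologicalSpace (TotalSpace (EuclideanSpace ℂ (Fin n)) Efam)]
    [FiberBundle (EuclideanSpace ℂ (Fin n)) Efam]
    [VectorBundle ℂ (EuclideanSpace ℂ (Fin n)) Efam]
    (F : TotalSpace (EuclideanSpace ℂ (Fin n)) Efam → E)
    (hF : ContMDiff ((𝓡 D).prod 𝓘(ℝ, EuclideanSpace ℂ (Fin n))) 𝓘(ℝ, E) 1 F)
    (hlin : ∀ x, IsLinearMap ℂ (fun w : Efam x => F ⟨x, w⟩)) (b₀ : B) :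
    ∃ f : Fin n → EuclideanSpace ℝ (Fin D) → E,
      (∀ j, ContDiffAt ℝ 1 (f j) (chartAt (EuclideanSpace ℝ (Fin D)) b₀ b₀)) ∧
      ∀ᶠ b in nhds b₀, ∀ w : Efam b, F ⟨b, w⟩ ∈ Submodule.span ℂ
        (Set.range fun j => f j (chartAt (EuclideanSpace ℝ (Fin D)) b₀ b)) := by
  classical
  set t := trivializationAt (EuclideanSpace ℂ (Fin n)) Efam b₀ with ht
  have hb₀ : b₀ ∈ t.baseSet := mem_baseSet_trivializationAt _ _ b₀
  let ε : Fin n → EuclideanSpace ℂ (Fin n) := fun j => EuclideanSpace.single j 1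
  set φ := chartAt (EuclideanSpace ℝ (Fin D)) b₀ with hφ
  refine ⟨fun j y => F (t.toOpenPartialHomeomorph.symm (φ.symm y, ε j)), ?_, ?_⟩
  · intro j
    let p : TotalSpace (EuclideanSpace ℂ (Fin n)) Efam := ⟨b₀, t.symm b₀ (ε j)⟩
    have h := (contMDiffAt_iff.1 (hF p)).2
    rw [FiberBundle.extChartAt] at h
    have hp : t p = (b₀, ε j) := t.apply_mk_symm hb₀ _
    have hr : Set.range ((𝓡 D).prod 𝓘(ℝ, EuclideanSpace ℂ (Fin n))) = Set.univ := by
      simp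
    rw [hr, contDiffWithinAt_univ] at h
    have hpt : ((t.toPartialEquiv ≫ (extChartAt (𝓡 D) b₀).prod
        (PartialEquiv.refl (EuclideanSpace ℂ (Fin n)))) p) = (φ b₀, ε j) := by
      have : ((t.toPartialEquiv ≫ (extChartAt (𝓡 D) b₀).prod
        (PartialEquiv.refl (EuclideanSpace ℂ (Fin n)))) p) = 
         (extChartAt (𝓡 D) b₀ (t p).1, (t p).2) := rfl
      rw [this, hp]; rfl
    have h' : ContDiffAt ℝ 1 (fun z : EuclideanSpace ℝ (Fin D) × EuclideanSpace ℂ (Fin n) =>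
       F (t.toOpenPartialHomeomorph.symm (φ.symm z.1, z.2))) (φ b₀, ε j) := by
      rw [← hpt]; exact h
    have hg : ContDiffAt ℝ 1 (fun y : EuclideanSpace ℝ (Fin D) => (y, ε j)) (φ b₀) :=
      contDiffAt_id.prodMk contDiffAt_const
    exact ContDiffAt.comp (g := fun z : EuclideanSpace ℝ (Fin D) × EuclideanSpace ℂ (Fin n) =>
       F (t.toOpenPartialHomeomorph.symm (φ.symm z.1, z.2))) (φ b₀) h' hg
  · filter_upwards [t.open_baseSet.mem_nhds hb₀,
      φ.open_source.mem_nhds (mem_chart_source _ b₀)] with b hb hbs w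
    simp only [φ.left_inv hbs]
    let L : Efam b →ₗ[ℂ] E := (hlin b).mk' _
    have h1 : F ⟨b, w⟩ = (L ∘ₗ (t.linearEquivAt ℂ b hb).symm.toLinearMap)
        (t.linearEquivAt ℂ b hb w) := by
      rw [LinearMap.comp_apply, LinearEquiv.coe_coe, LinearEquiv.symm_apply_apply]; rfl
    have h2 : ∀ u, F (t.toOpenPartialHomeomorph.symm (b, u)) =
        (L ∘ₗ (t.linearEquivAt ℂ b hb).symm.toLinearMap) u := by
      intro u
      rw [← t.mk_symm hb]; rfl
    simp only [h2]
    rw [h1]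
    generalize (L ∘ₗ (t.linearEquivAt ℂ b hb).symm.toLinearMap) = M
    generalize t.linearEquivAt ℂ b hb w = u
    have : u = ∑ j, u j • ε j := by
      ext k; simp [ε, Finset.sum_apply, Pi.single_apply]
    rw [this, map_sum]
    refine Submodule.sum_mem _ fun j _ => ?_
    rw [map_smul]
    exact Submodule.smul_mem _ _ (Submodule.subset_span ⟨j, rfl⟩)

theorem aux_dim {D : ℕ} {E : Type} [NormedAddCommGroup E] [NormedSpace ℂ E]
    [FiniteDimensional ℂ E] {ι : Type} [Fintype ι] (P : Submodule ℂ E)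
    (f : ι → EuclideanSpace ℝ (Fin D) → E) (y₀ : EuclideanSpace ℝ (Fin D))
    (hf : ∀ j, ContDiffAt ℝ 1 (f j) y₀) :
    ∃ U ∈ nhds y₀, dimH {x : E | ∃ y ∈ U, x ∈ P ⊔ Submodule.span ℂ (Set.range fun j => f j y)} ≤
      ((D + 2 * Fintype.card ι + 2 * finrank ℂ P : ℕ) : ENNReal) := by
  have h1 : ∀ j, ∀ᶠ y in nhds y₀, ContDiffAt ℝ 1 (f j) y := fun j => (hf j).eventually (by simp)
  obtain ⟨r, hr, hball⟩ := Metric.eventually_nhds_iff_ball.1 (Filter.eventually_all.2 h1)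
  refine ⟨Metric.ball y₀ r, Metric.ball_mem_nhds _ hr, ?_⟩
  let X := EuclideanSpace ℝ (Fin D) × (ι → ℂ) × P
  let Φ : X → E := fun z => (z.2.2 : E) + ∑ j, z.2.1 j • f j z.1
  let s : Set X := Metric.ball y₀ r ×ˢ Set.univ
  have hs : Convex ℝ s := (convex_ball _ _).prod convex_univ
  have hΦ : ContDiffOn ℝ 1 Φ s := by
    intro z hz
    apply ContDiffAt.contDiffWithinAt
    have e1 : ContDiff ℝ 1 (fun z : X => (z.2.2 : E)) :=
      (P.subtypeL.restrictScalars ℝ).contDiff.comp (contDiff_snd.comp contDiff_snd)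
    refine e1.contDiffAt.add (ContDiffAt.sum fun j _ => ?_)
    have e2 : ContDiff ℝ 1 (fun z : X => z.2.1 j) :=
      (contDiff_apply ℝ ℂ j).comp (contDiff_fst.comp contDiff_snd)
    refine e2.contDiffAt.smul ?_
    exact ContDiffAt.comp (g := f j) z (hball _ hz.1 j) contDiff_fst.contDiffAt
  have hsub : {x : E | ∃ y ∈ Metric.ball y₀ r,
      x ∈ P ⊔ Submodule.span ℂ (Set.range fun j => f j y)} ⊆ Φ '' s := by
    rintro x ⟨y, hy, hx⟩
    obtain ⟨p, hp, q, hq, rfl⟩ := Submodule.mem_sup.1 hx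
    obtain ⟨c, rfl⟩ := (Submodule.mem_span_range_iff_exists_fun ℂ).1 hq
    exact ⟨(y, c, ⟨p, hp⟩), ⟨hy, trivial⟩, rfl⟩
  calc _ ≤ dimH (Φ '' s) := dimH_mono hsub
    _ ≤ dimH s := hΦ.dimH_image_le hs subset_rfl
    _ ≤ dimH (Set.univ : Set X) := dimH_mono (Set.subset_univ _)
    _ = (finrank ℝ X : ENNReal) := Real.dimH_univ_eq_finrank X
    _ = _ := by
      have : finrank ℝ X = D + 2 * Fintype.card ι + 2 * finrank ℂ P := by
        have a1 : finrank ℝ P = 2 * finrank ℂ P := finrank_real_of_complex P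
        have a2 : finrank ℝ (ι → ℂ) = 2 * Fintype.card ι := by
          rw [finrank_real_of_complex, finrank_fintype_fun_eq_card]
        rw [finrank_prod, finrank_prod, a1, a2, finrank_euclideanSpace_fin]; ring
      rw [this]

/-- **Inductive step in the proof of Lemma 11.4 of the paper.**
Setting as in Lemma 11.4: `E` is a complex normed space of dimension `d`, `V` a second-countable
`C¹` real manifold without boundary of dimension `D ≥ 1`; for `i = 1, …, l`, `K i` is a compact
subset of the open set `Vo i ⊆ V`, `Efam i` is a `C¹` complex vector bundle of rank `dI i` over
`Vo i`, and `Fmap i` is a `C¹` map from its total space to `E` which is complex-linear on each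
fiber; `F(v)` is the subspace of `E` spanned by the images of the fibers over `v` of the bundles
with `v ∈ K i`.  Assume `a ≥ 1` and `a + D·(d₁ + … + d_l) < d`, and let `E'₀` be an
`(a-1)`-dimensional subspace with `E'₀ ∩ F(v) = {0}` for all `v`.  Then the set of vectors
`e ∉ E'₀` with `(E'₀ + ℂ e) ∩ F(v) = {0}` for all `v` is dense in `E`. -/
theorem dense_vectors_extending_transverse_subspace
    {D l d a : ℕ} (hD : 1 ≤ D)
    {E : Type} [NormedAddCommGroup E] [NormedSpace ℂ E] [FiniteDimensional ℂ E]
    (hd : finrank ℂ E = d)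
    {V : Type} [TopologicalSpace V] [T2Space V] [SecondCountableTopology V]
    [ChartedSpace (EuclideanSpace ℝ (Fin D)) V]
    [HasGroupoid V (contDiffGroupoid 1 (𝓡 D))]
    (dI : Fin l → ℕ)
    (Vo : Fin l → Opens V) (K : Fin l → Set V)
    (hKcpt : ∀ i, IsCompact (K i)) (hKV : ∀ i, K i ⊆ (Vo i : Set V))
    (Efam : (i : Fin l) → (Vo i) → Type)
    [∀ i x, AddCommGroup (Efam i x)] [∀ i x, Module ℂ (Efam i x)]
    [∀ i x, TopologicalSpace (Efam i x)]
    [∀ i, TopologicalSpace (TotalSpace (EuclideanSpace ℂ (Fin (dI i))) (Efam i))]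
    [∀ i, FiberBundle (EuclideanSpace ℂ (Fin (dI i))) (Efam i)]
    [∀ i, VectorBundle ℂ (EuclideanSpace ℂ (Fin (dI i))) (Efam i)]
    -- the coordinate changes of each bundle are `C¹`
    (hbundle : ∀ i, ∀ (e e' : Trivialization (EuclideanSpace ℂ (Fin (dI i)))
        (Bundle.TotalSpace.proj (E := Efam i)))
        [MemTrivializationAtlas e] [MemTrivializationAtlas e'],
        ContMDiffOn (𝓡 D)
          𝓘(ℝ, EuclideanSpace ℂ (Fin (dI i)) →L[ℂ] EuclideanSpace ℂ (Fin (dI i))) 1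
          (fun b => (e.coordChangeL ℂ e' b :
            EuclideanSpace ℂ (Fin (dI i)) →L[ℂ] EuclideanSpace ℂ (Fin (dI i))))
          (e.baseSet ∩ e'.baseSet))
    (Fmap : (i : Fin l) → TotalSpace (EuclideanSpace ℂ (Fin (dI i))) (Efam i) → E)
    (hFC1 : ∀ i, ContMDiff ((𝓡 D).prod 𝓘(ℝ, EuclideanSpace ℂ (Fin (dI i)))) 𝓘(ℝ, E) 1 (Fmap i))
    (hFlin : ∀ i (x : Vo i), IsLinearMap ℂ (fun w : Efam i x => Fmap i ⟨x, w⟩))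
    (ha : 1 ≤ a) (hdim : a + D * (∑ i, dI i) < d)
    (E'₀ : Submodule ℂ E) (hE'₀dim : finrank ℂ E'₀ = a - 1)
    (hE'₀ : ∀ v : V,
      E'₀ ⊓ (⨆ i, ⨆ (h : v ∈ K i),
        Submodule.span ℂ (Set.range fun w : Efam i ⟨v, hKV i h⟩ =>
          Fmap i ⟨⟨v, hKV i h⟩, w⟩)) = ⊥) :
    Dense {e : E | e ∉ E'₀ ∧ ∀ v : V,
      (E'₀ ⊔ Submodule.span ℂ {e}) ⊓
        (⨆ i, ⨆ (h : v ∈ K i),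
          Submodule.span ℂ (Set.range fun w : Efam i ⟨v, hKV i h⟩ =>
            Fmap i ⟨⟨v, hKV i h⟩, w⟩)) = ⊥} := by
  classical
  have hFD : FiniteDimensional ℝ E := FiniteDimensional.complexToReal E
  let Fv : V → Submodule ℂ E := fun v => ⨆ i, ⨆ (h : v ∈ K i),
        Submodule.span ℂ (Set.range fun w : Efam i ⟨v, hKV i h⟩ =>
          Fmap i ⟨⟨v, hKV i h⟩, w⟩)
  change ∀ v : V, E'₀ ⊓ Fv v = ⊥ at hE'₀
  change Dense {e : E | e ∉ E'₀ ∧ ∀ v : V, (E'₀ ⊔ Submodule.span ℂ {e}) ⊓ Fv v = ⊥}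
  let bad : Set E := (E'₀ : Set E) ∪ ⋃ v, ((E'₀ ⊔ Fv v : Submodule ℂ E) : Set E)
  -- the complement of `bad` consists of good vectors
  suffices hbad : dimH bad < finrank ℝ E by
    refine (dense_compl_of_dimH_lt_finrank hbad).mono ?_
    intro e he
    simp only [bad, Set.mem_compl_iff, Set.mem_union, not_or, Set.mem_iUnion, not_exists,
      SetLike.mem_coe] at he
    refine ⟨he.1, fun v => ?_⟩
    rw [eq_bot_iff]
    rintro x ⟨hx1, hx2⟩
    obtain ⟨p, hp, q, hq, rfl⟩ := Submodule.mem_sup.1 hx1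
    obtain ⟨c, rfl⟩ := Submodule.mem_span_singleton.1 hq
    by_cases hc : c = 0
    · subst hc
      rw [← hE'₀ v]
      simp only [zero_smul, add_zero] at hx2 ⊢
      exact ⟨hp, hx2⟩
    · exfalso
      apply he.2 v
      have h1 : c • e ∈ E'₀ ⊔ Fv v := by
        have : c • e = (p + c • e) - p := by abel
        rw [this]
        exact Submodule.sub_mem _ (Submodule.mem_sup_right hx2) (Submodule.mem_sup_left hp)
      exact (Submodule.smul_mem_iff _ hc).1 h1
  have hfin : finrank ℝ E = 2 * d := by rw [finrank_real_of_complex, hd]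
  let S := ∑ i, dI i
  have hE0 : dimH (E'₀ : Set E) ≤ ((2 * (a - 1) : ℕ) : ENNReal) := by
    have := (E'₀.subtypeL.restrictScalars ℝ).contDiff (n := 1) |>.dimH_range_le
    rw [finrank_real_of_complex, hE'₀dim] at this
    convert this using 2
    ext x; simp
  -- local version
  have hloc : ∀ v₀ : V, ∃ N ∈ nhds v₀,
      dimH (⋃ v ∈ N, ((E'₀ ⊔ Fv v : Submodule ℂ E) : Set E)) ≤
        ((D + 2 * S + 2 * (a - 1) : ℕ) : ENNReal) := by
    intro v₀
    set φ := chartAt (EuclideanSpace ℝ (Fin D)) v₀ with hφ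
    have key : ∀ i, ∃ f : Fin (dI i) → EuclideanSpace ℝ (Fin D) → E,
        (∀ j, ContDiffAt ℝ 1 (f j) (φ v₀)) ∧
        ∀ᶠ v in nhds v₀, ∀ (h : v ∈ K i) (w : Efam i ⟨v, hKV i h⟩),
          Fmap i ⟨⟨v, hKV i h⟩, w⟩ ∈ Submodule.span ℂ (Set.range fun j => f j (φ v)) := by
      intro i
      by_cases hi : v₀ ∈ K i
      · obtain ⟨f, hf, hev⟩ := aux_local (Efam i) (Fmap i) (hFC1 i) (hFlin i) ⟨v₀, hKV i hi⟩
        refine ⟨f, hf, ?_⟩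
        rw [nhds_subtype_eq_comap, Filter.eventually_comap] at hev
        filter_upwards [hev] with v hv h w
        exact hv ⟨v, hKV i h⟩ rfl w
      · refine ⟨fun _ _ => 0, fun j => contDiffAt_const, ?_⟩
        filter_upwards [(hKcpt i).isClosed.isOpen_compl.mem_nhds hi] with v hv h
        exact absurd h hv
    choose f hf hev using key
    obtain ⟨U, hU, hdimU⟩ := aux_dim E'₀ (fun (j : Σ i, Fin (dI i)) => f j.1 j.2) (φ v₀)
      (fun j => hf j.1 j.2)
    have hc : ContinuousAt φ v₀ := φ.continuousAt (mem_chart_source _ v₀)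
    refine ⟨_, Filter.inter_mem (hc.preimage_mem_nhds hU) (Filter.eventually_all.2 hev), ?_⟩
    rw [Fintype.card_sigma, hE'₀dim] at hdimU
    simp only [Fintype.card_fin] at hdimU
    refine (dimH_mono ?_).trans hdimU
    intro x hx
    simp only [Set.mem_iUnion] at hx
    obtain ⟨v, ⟨hv1, hv2⟩, hx⟩ := hx
    refine ⟨φ v, hv1, ?_⟩
    refine (sup_le_sup_left ?_ E'₀) hx
    refine iSup_le fun i => iSup_le fun h => Submodule.span_le.2 ?_
    rintro _ ⟨w, rfl⟩
    refine Submodule.span_mono ?_ (hv2 i h w)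
    rintro _ ⟨j, rfl⟩
    exact ⟨⟨i, j⟩, rfl⟩
  by_cases hS : S = 0
  · -- all bundles have rank zero
    have hsub : bad ⊆ (E'₀ : Set E) := by
      refine Set.union_subset subset_rfl (Set.iUnion_subset fun v => ?_)
      have : Fv v = ⊥ := by
        refine (iSup_eq_bot.2 fun i => iSup_eq_bot.2 fun h => ?_)
        rw [Submodule.span_eq_bot]
        rintro _ ⟨w, rfl⟩
        have hi : dI i = 0 := by
          have := Finset.sum_eq_zero_iff.1 hS i (Finset.mem_univ _)
          exact this
        have hsing : Subsingleton (EuclideanSpace ℂ (Fin (dI i))) := by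
          rw [hi]; infer_instance
        have hw : w = 0 := by
          let t := trivializationAt (EuclideanSpace ℂ (Fin (dI i))) (Efam i) ⟨v, hKV i h⟩
          let L := t.linearEquivAt ℂ ⟨v, hKV i h⟩ (mem_baseSet_trivializationAt _ _ _)
          exact L.injective (Subsingleton.elim _ _)
        rw [hw]
        exact (hFlin i ⟨v, hKV i h⟩).map_zero
      rw [this, sup_bot_eq]
    refine (dimH_mono hsub).trans_lt (hE0.trans_lt ?_)
    rw [hfin]
    exact_mod_cast (by omega : 2 * (a - 1) < 2 * d)
  · have hlt : D + 2 * S + 2 * (a - 1) < 2 * d := by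
      change a + D * S < d at hdim
      have hS1 : 1 ≤ S := Nat.one_le_iff_ne_zero.2 hS
      obtain ⟨S', hS'⟩ := Nat.exists_eq_add_of_le hS1
      obtain ⟨D', hD'⟩ := Nat.exists_eq_add_of_le hD
      rw [hS', hD'] at hdim ⊢
      have : (1 + D') * (1 + S') = 1 + D' + S' + D' * S' := by ring
      rw [this] at hdim
      have := Nat.zero_le (D' * S')
      omega
    choose N hN hdN using hloc
    obtain ⟨T, hT, hcov⟩ := TopologicalSpace.countable_cover_nhds hN
    have hsub : bad ⊆ (E'₀ : Set E) ∪ ⋃ v₀ ∈ T, ⋃ v ∈ N v₀, ((E'₀ ⊔ Fv v : Submodule ℂ E) : Set E) := by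
      refine Set.union_subset_union_right _ (Set.iUnion_subset fun v x hx => ?_)
      have hv : v ∈ ⋃ x ∈ T, N x := hcov ▸ Set.mem_univ v
      simp only [Set.mem_iUnion] at hv ⊢
      obtain ⟨v₀, h0, hv⟩ := hv
      exact ⟨v₀, h0, v, hv, hx⟩
    refine (dimH_mono hsub).trans_lt ?_
    rw [hfin]
    refine lt_of_le_of_lt ?_ (Nat.cast_lt.2 hlt)
    rw [dimH_union, dimH_bUnion hT]
    refine max_le (hE0.trans ?_) (iSup₂_le fun v₀ _ => hdN v₀)
    exact_mod_cast (by omega : 2 * (a - 1) ≤ D + 2 * S + 2 * (a - 1))
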